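/- For suitable (sufficiently large) absolute constants C₁, C₂ in the definition of E_t, there exists an absolute constant C > 0 such that for every t ∈ [T], ∫_{E_t^c} p_{X_t^GMM}(x) dx ≤ C T^{−3}, i.e., P{X_t^GMM ∉ E_t} ≤ C T^{−3}. -/

import Mathlib

open MeasureTheory Real Finset
open scoped RealInnerProductSpace BigOperators

noncomputable section

/-- Density of the Gaussian distribution `N(m, v I_d)` on `ℝ^d`. -/
def gaussV (d : ℕ) (v : ℝ) (m x : EuclideanSpace ℝ (Fin d)) : ℝ :=
  (2 * Real.pi * v) ^ (-(d : ℝ) / 2) * Real.exp (-‖x - m‖ ^ 2 / (2 * v))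

/-- Density of the Gaussian mixture `∑_k w_k N(√abar μ_k, I_d)`. -/
def mixDensity (d K : ℕ) (w : Fin K → ℝ) (μ : Fin K → EuclideanSpace ℝ (Fin d))
    (abar : ℝ) (x : EuclideanSpace ℝ (Fin d)) : ℝ :=
  ∑ k, w k * gaussV d 1 (Real.sqrt abar • μ k) x

/-- Posterior component weights `π_k^{(t)}(x)`. -/
def postWeight (d K : ℕ) (w : Fin K → ℝ) (μ : Fin K → EuclideanSpace ℝ (Fin d))
    (abar : ℝ) (k : Fin K) (x : EuclideanSpace ℝ (Fin d)) : ℝ :=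
  w k * Real.exp (-‖x - Real.sqrt abar • μ k‖ ^ 2 / 2) /
    ∑ i, w i * Real.exp (-‖x - Real.sqrt abar • μ i‖ ^ 2 / 2)

/-- Closed form of the score `∇ log p_{X_t^GMM}` of the diffused GMM. -/
def gmmScore (d K : ℕ) (w : Fin K → ℝ) (μ : Fin K → EuclideanSpace ℝ (Fin d))
    (abar : ℝ) (x : EuclideanSpace ℝ (Fin d)) : EuclideanSpace ℝ (Fin d) :=
  -x + Real.sqrt abar • ∑ k, postWeight d K w μ abar k x • μ k

/-- The Jacobian matrix `J_t(x)` of the diffused GMM score. -/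
def gmmJac (d K : ℕ) (w : Fin K → ℝ) (μ : Fin K → EuclideanSpace ℝ (Fin d))
    (abar : ℝ) (x : EuclideanSpace ℝ (Fin d)) : Matrix (Fin d) (Fin d) ℝ :=
  Matrix.of fun i j =>
    (if i = j then (-1 : ℝ) else 0) +
      abar * ((∑ k, postWeight d K w μ abar k x * (μ k i * μ k j)) -
        (∑ k, postWeight d K w μ abar k x * μ k i) *
          (∑ k, postWeight d K w μ abar k x * μ k j))

/-- The quantity `ζ_k^{(t)}(x)`, where `abar` plays the role of `ᾱ_t` and `a` that of `α_t`. -/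
def zeta (d K : ℕ) (w : Fin K → ℝ) (μ : Fin K → EuclideanSpace ℝ (Fin d))
    (abar a : ℝ) (k : Fin K) (x : EuclideanSpace ℝ (Fin d)) : ℝ :=
  (1 - a ^ 2) / (2 * a ^ 2) *
      (‖x - Real.sqrt abar • μ k‖ ^ 2 -
        ∑ i, postWeight d K w μ abar i x * ‖x - Real.sqrt abar • μ i‖ ^ 2) +
    (1 - a) / a ^ 2 *
      ⟪gmmScore d K w μ abar x,
        ∑ i, postWeight d K w μ abar i x • (Real.sqrt abar • (μ i - μ k))⟫

/-- The typical set `E_t`. -/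
def Eset (d K T : ℕ) (w : Fin K → ℝ) (μ : Fin K → EuclideanSpace ℝ (Fin d))
    (abar a C₁ C₂ : ℝ) : Set (EuclideanSpace ℝ (Fin d)) :=
  {x | Matrix.trace (1 + gmmJac d K w μ abar x) ≤ C₁ * Real.log ((K : ℝ) * T) ∧
    ∑ k, postWeight d K w μ abar k x * Real.exp (-(zeta d K w μ abar a k x)) ≤
      Real.exp (C₂ * (1 - a) ^ 2 * Real.log ((K : ℝ) * T) ^ 2)}

/-- The set `A_t`. -/
def Aset (d K T : ℕ) (w : Fin K → ℝ) (μ : Fin K → EuclideanSpace ℝ (Fin d))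
    (abar cR C₇ : ℝ) : Set (EuclideanSpace ℝ (Fin d)) :=
  {x | -(C₇ * d * Real.log ((d : ℝ) * T)) ≤ Real.log (mixDensity d K w μ abar x) ∧
    ‖x‖ ≤ Real.sqrt (2 * (T : ℝ) ^ (2 * cR) + 16 * d * Real.log T)}

/-- The set `T_k`. -/
def Tset (d K T : ℕ) (μ : Fin K → EuclideanSpace ℝ (Fin d))
    (abar C₅ : ℝ) (k : Fin K) : Set (EuclideanSpace ℝ (Fin d)) :=
  {x | ∀ i : Fin K,
    |⟪x - Real.sqrt abar • μ k, Real.sqrt abar • (μ i - μ k)⟫| ≤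
      C₅ * Real.sqrt (abar * Real.log ((K : ℝ) * T)) * ‖μ i - μ k‖}

/-- Forward (diffused) marginal density at noise level `abar`, starting from density `f₀`. -/
def fwdDensity (d : ℕ) (f₀ : EuclideanSpace ℝ (Fin d) → ℝ) (abar : ℝ)
    (x : EuclideanSpace ℝ (Fin d)) : ℝ :=
  ∫ y, gaussV d (1 - abar) (Real.sqrt abar • y) x * f₀ y

/-- Stein score of a density `p`. -/
def scoreOf (d : ℕ) (p : EuclideanSpace ℝ (Fin d) → ℝ)
    (x : EuclideanSpace ℝ (Fin d)) : EuclideanSpace ℝ (Fin d) :=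
  gradient (fun y => Real.log (p y)) x

/-- Truncation (clipping) of a score estimate at radius `R`. -/
def clipFn (d : ℕ) (R : ℝ) (s : EuclideanSpace ℝ (Fin d) → EuclideanSpace ℝ (Fin d))
    (x : EuclideanSpace ℝ (Fin d)) : EuclideanSpace ℝ (Fin d) :=
  if ‖s x‖ ≤ R then s x else 0

/-- Total-variation distance between two densities on `ℝ^d`. -/
def tvDist (d : ℕ) (p q : EuclideanSpace ℝ (Fin d) → ℝ) : ℝ :=
  (1 / 2) * ∫ x, |p x - q x|

/-- Density of the one-step (DDPM-type) reverse Gaussian transition with rate `a`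
and drift field `s`, from `y` to `x`. -/
def ddpmKernel (d : ℕ) (a : ℝ) (s : EuclideanSpace ℝ (Fin d) → EuclideanSpace ℝ (Fin d))
    (y x : EuclideanSpace ℝ (Fin d)) : ℝ :=
  gaussV d (1 - a) ((Real.sqrt a)⁻¹ • (y + (1 - a) • s y)) x

/-- Density of `Y_{T-n}` for the DDPM sampler run with rates `α` and score estimates `s`. -/
def ddpmDensity (d T : ℕ) (α : ℕ → ℝ)
    (s : ℕ → EuclideanSpace ℝ (Fin d) → EuclideanSpace ℝ (Fin d)) :
    ℕ → EuclideanSpace ℝ (Fin d) → ℝ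
  | 0 => gaussV d 1 0
  | n + 1 => fun x =>
      ∫ y, ddpmKernel d (α (T - n)) (s (T - n)) y x * ddpmDensity d T α s n y

/-- Density (on `ℝ^d`) of `Ȳ_{T-n}^-` for the auxiliary reverse process. -/
def pbarMinus (d K T : ℕ) (w : Fin K → ℝ) (μ : Fin K → EuclideanSpace ℝ (Fin d))
    (αbar α : ℕ → ℝ) (C₁ C₂ : ℝ) : ℕ → EuclideanSpace ℝ (Fin d) → ℝ
  | 0 => (Eset d K T w μ (αbar T) (α T) C₁ C₂).indicator (gaussV d 1 0)
  | n + 1 =>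
      (Eset d K T w μ (αbar (T - n)) (α (T - n)) C₁ C₂).indicator fun x =>
        ∫ y in Eset d K T w μ (αbar (T - n)) (α (T - n)) C₁ C₂,
          ddpmKernel d (α (T - n)) (gmmScore d K w μ (αbar (T - n))) y x *
            min (mixDensity d K w μ (αbar (T - n)) y)
              (pbarMinus d K T w μ αbar α C₁ C₂ n y)

/-- The function `Δ_t(x) = p_{X_t^GMM}(x) - p_{Ȳ_t}(x)`. -/
def DeltaFn (d K T : ℕ) (w : Fin K → ℝ) (μ : Fin K → EuclideanSpace ℝ (Fin d))
    (αbar α : ℕ → ℝ) (C₁ C₂ : ℝ) (t : ℕ) (x : EuclideanSpace ℝ (Fin d)) : ℝ :=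
  mixDensity d K w μ (αbar t) x -
    min (mixDensity d K w μ (αbar t) x) (pbarMinus d K T w μ αbar α C₁ C₂ (T - t) x)

end

/-!
Write `u_k = √ᾱ_t μ_k`, `p_k` for the posterior weights at `x` and `f` for the mixture density.
The posterior moment `∑ p_i p_j exp (‖u_i - u_j‖² / 8) + ∑ p_k / w_k` has integral at most
`K² + K` against `f`. Indeed `f p_k = w_k g_k` with `g_k` the Gaussian density centred at `u_k`, and
by Apollonius' identity `g_i g_j exp (‖u_i - u_j‖² / 4)` is the square of the Gaussian density
centred at the midpoint of `u_i` and `u_j`. By Markov's inequality the posterior moment exceeds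
`K² T³` with probability at most `2 / T³`.

Where it does not, both conditions defining `E_t` hold. The trace of `I + J_t` is the posterior
variance of `u_k`, bounded by Jensen's inequality. The vector `-ζ` is `1 - α_t` times a centred
variable whose exponential moment at scale `1 / 16` is polynomial in `K T`, so rescaling by
`log (K T)` bounds its moment generating function by that of a Gaussian, up to constants. This needs
`1 - α_t` to be small, also at `t = 1` where `α_1 = ᾱ_1`: the recursion multiplies the odds
`ᾱ / (1 - ᾱ)` by at least `1 + c₁ log T / T` per step, and `T ^ (-c₀) (1 + c₁ log T / T) ^ (T - 1)`
tends to infinity when `c₀ < c₁`.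
-/

lemma exp_add_le_exp_two_mul_add (s t : ℝ) : exp (s + t) ≤ exp (2 * s) + exp (2 * t) := by
  rcases le_total s t with h | h
  · exact (exp_le_exp.2 (by linarith)).trans (le_add_of_nonneg_left (exp_pos _).le)
  · exact (exp_le_exp.2 (by linarith)).trans (le_add_of_nonneg_right (exp_pos _).le)

lemma setIntegral_le_integral_div {X : Type*} [MeasurableSpace X] {ν : Measure X} {f F : X → ℝ}
    (hf : Integrable f ν) (hF : Integrable F ν) (hF₀ : 0 ≤ F) {B : ℝ} (hB : 0 < B) {s : Set X}
    (hs : ∀ x ∈ s, B * f x ≤ F x) : ∫ x in s, f x ∂ν ≤ (∫ x, F x ∂ν) / B := by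
  have hFB : Integrable (fun x => F x / B) ν := hF.div_const B
  have le_ae : ∀ᵐ x ∂ν.restrict s, f x ≤ F x / B :=
    (ae_restrict_iff₀ (nullMeasurableSet_le hf.restrict.aemeasurable hFB.restrict.aemeasurable)).2
      (.of_forall fun x hx => (le_div_iff₀' hB).2 (hs x hx))
  calc ∫ x in s, f x ∂ν ≤ ∫ x in s, F x / B ∂ν :=
        setIntegral_mono_ae_restrict hf.integrableOn hFB.integrableOn le_ae
    _ ≤ ∫ x, F x / B ∂ν :=
        setIntegral_le_integral hFB (.of_forall fun x => div_nonneg (hF₀ x) hB.le)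
    _ = (∫ x, F x ∂ν) / B := integral_div B F

section WeightedSums

variable {ι : Type*} [Fintype ι] {p : ι → ℝ}

lemma sum_smul_sub {E : Type*} [AddCommGroup E] [Module ℝ E] (hp : ∑ i, p i = 1) (u : ι → E)
    (v : E) : ∑ i, p i • (u i - v) = ∑ i, p i • u i - v := by
  simp only [smul_sub, sum_sub_distrib, ← sum_smul, hp, one_smul]

lemma sum_smul_sub_left {E : Type*} [AddCommGroup E] [Module ℝ E] (hp : ∑ i, p i = 1) (u : ι → E)
    (v : E) : ∑ i, p i • (v - u i) = v - ∑ i, p i • u i := by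
  simp only [smul_sub, sum_sub_distrib, ← sum_smul, hp, one_smul]

lemma exp_mul_sub_one_sub_le {s : ℝ} (hs : |s| ≤ 1) (z : ℝ) :
    exp (s * z) - 1 - s * z ≤ s ^ 2 * (exp |z| - 1 - |z|) := by
  have hasSum_tail (y : ℝ) :
      HasSum (fun n : ℕ => y ^ (n + 2) / (n + 2).factorial) (exp y - 1 - y) := by
    have h := (hasSum_nat_add_iff' 2).2 (NormedSpace.expSeries_div_hasSum_exp y)
    simpa [Finset.sum_range_succ, Real.exp_eq_exp_ℝ, sub_sub] using h
  refine hasSum_le (fun n => ?_) (hasSum_tail (s * z)) ((hasSum_tail |z|).mul_left (s ^ 2))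
  rw [← mul_div_assoc]
  gcongr
  calc (s * z) ^ (n + 2) ≤ |(s * z) ^ (n + 2)| := le_abs_self _
    _ = |s| ^ n * (s ^ 2 * |z| ^ (n + 2)) := by rw [abs_pow, abs_mul, ← sq_abs s]; ring
    _ ≤ s ^ 2 * |z| ^ (n + 2) :=
      mul_le_of_le_one_left (by positivity) (pow_le_one₀ (abs_nonneg s) hs)

lemma exp_sum_mul_le (hp : p ∈ stdSimplex ℝ ι) (Y : ι → ℝ) :
    exp (∑ i, p i * Y i) ≤ ∑ i, p i * exp (Y i) :=
  convexOn_exp.map_sum_le (fun i _ => hp.1 i) hp.2 fun _ _ => Set.mem_univ _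

lemma sum_mul_exp_mul_le_rpow (hp : p ∈ stdSimplex ℝ ι) {θ : ℝ} (hθ₀ : 0 ≤ θ) (hθ₁ : θ ≤ 1)
    (Y : ι → ℝ) : ∑ i, p i * exp (θ * Y i) ≤ (∑ i, p i * exp (Y i)) ^ θ := by
  have h := (concaveOn_rpow hθ₀ hθ₁).le_map_sum (t := univ) (p := fun i => exp (Y i))
    (fun i _ => hp.1 i) hp.2 fun i _ => (exp_pos _).le
  simpa only [smul_eq_mul, ← exp_mul, mul_comm] using h

lemma sum_mul_exp_mul_le_of_centred (hp : p ∈ stdSimplex ℝ ι) {X : ι → ℝ}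
    (hX : ∑ i, p i * X i = 0) {N θ : ℝ} (hN : 1 ≤ N) (hθ₀ : 0 ≤ θ) (hθ₁ : θ ≤ 1)
    (hmom : ∑ i, p i * exp |X i| ≤ exp N) :
    ∑ i, p i * exp (θ * X i) ≤ exp (3 * (θ * N) ^ 2) := by
  have moment_le {s : ℝ} (hs₀ : 0 ≤ s) (hs₁ : s ≤ 1) :
      ∑ i, p i * exp (s * |X i|) ≤ exp (s * N) := by
    refine (sum_mul_exp_mul_le_rpow hp hs₀ hs₁ _).trans ?_
    rw [mul_comm s, exp_mul]
    exact rpow_le_rpow (sum_nonneg fun i _ => mul_nonneg (hp.1 i) (exp_pos _).le) hmom hs₀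
  rcases le_total (θ * N) 1 with hsmall | hlarge
  · -- Rescaling `X` to `X / N` makes its exponential moment at most `e`.
    have pointwise (i : ι) :
        exp (θ * X i) ≤ 1 + θ * X i + (θ * N) ^ 2 * exp (N⁻¹ * |X i|) := by
      have h := exp_mul_sub_one_sub_le (abs_le.2 ⟨by nlinarith, hsmall⟩) (N⁻¹ * X i)
      rw [abs_mul, abs_of_pos (by positivity : 0 < N⁻¹),
        show θ * N * (N⁻¹ * X i) = θ * X i by field_simp] at h
      have : 0 ≤ (θ * N) ^ 2 * (1 + N⁻¹ * |X i|) := by positivity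
      linarith
    have rescaled : ∑ i, p i * exp (N⁻¹ * |X i|) ≤ 3 := by
      refine (moment_le (by positivity) (inv_le_one_of_one_le₀ hN)).trans ?_
      rw [inv_mul_cancel₀ (by positivity)]
      linarith [exp_one_lt_d9]
    calc ∑ i, p i * exp (θ * X i)
        ≤ ∑ i, p i * (1 + θ * X i + (θ * N) ^ 2 * exp (N⁻¹ * |X i|)) :=
          sum_le_sum fun i _ => mul_le_mul_of_nonneg_left (pointwise i) (hp.1 i)
      _ = ∑ i, p i + θ * ∑ i, p i * X i + (θ * N) ^ 2 * ∑ i, p i * exp (N⁻¹ * |X i|) := by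
          simp only [mul_sum, ← sum_add_distrib]
          exact sum_congr rfl fun i _ => by ring
      _ ≤ 1 + (θ * N) ^ 2 * 3 := by
          rw [hp.2, hX, mul_zero, add_zero]
          gcongr
      _ ≤ exp (3 * (θ * N) ^ 2) := by linarith [add_one_le_exp (3 * (θ * N) ^ 2)]
  · calc ∑ i, p i * exp (θ * X i) ≤ ∑ i, p i * exp (θ * |X i|) := by
          gcongr with i
          exacts [hp.1 i, le_abs_self _]
      _ ≤ exp (θ * N) := moment_le hθ₀ hθ₁
      _ ≤ exp (3 * (θ * N) ^ 2) := exp_le_exp.2 (by nlinarith)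

lemma sum_mul_exp_mul_sub_mean_le (hp : p ∈ stdSimplex ℝ ι) {Y : ι → ℝ} {N θ : ℝ} (hN : 1 ≤ N)
    (hθ₀ : 0 ≤ θ) (hθ₁ : θ ≤ 1) (hmom : ∑ i, p i * exp |Y i| ≤ exp N) :
    ∑ i, p i * exp (θ * (Y i - ∑ j, p j * Y j)) ≤ exp (12 * (θ * N) ^ 2) := by
  set m := ∑ j, p j * Y j
  have exp_abs_mean_le : exp |m| ≤ exp N := by
    refine le_trans (exp_le_exp.2 ?_) ((exp_sum_mul_le hp fun i => |Y i|).trans hmom)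
    refine (abs_sum_le_sum_abs _ _).trans_eq (sum_congr rfl fun i _ => ?_)
    rw [abs_mul, abs_of_nonneg (hp.1 i)]
  have centred : ∑ i, p i * (Y i - m) = 0 :=
    (sum_smul_sub hp.2 Y m).trans (sub_self m)
  have moment_le : ∑ i, p i * exp |Y i - m| ≤ exp (2 * N) :=
    calc ∑ i, p i * exp |Y i - m| ≤ ∑ i, p i * (exp |Y i| * exp |m|) := by
          gcongr with i
          · exact hp.1 i
          · rw [← exp_add]
            exact exp_le_exp.2 (abs_sub _ _)
      _ = (∑ i, p i * exp |Y i|) * exp |m| := by simp only [sum_mul, mul_assoc]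
      _ ≤ exp N * exp N := by gcongr
      _ = exp (2 * N) := by rw [← exp_add, two_mul]
  convert! sum_mul_exp_mul_le_of_centred hp centred (by linarith : 1 ≤ 2 * N) hθ₀ hθ₁ moment_le
    using 2
  ring

lemma sum_mul_norm_sub_sq {E : Type*} [NormedAddCommGroup E] [InnerProductSpace ℝ E]
    (hp : ∑ i, p i = 1) (u : ι → E) (x : E) :
    ∑ i, p i * ‖x - u i‖ ^ 2 =
      ‖x - ∑ j, p j • u j‖ ^ 2 + ∑ i, p i * ‖u i - ∑ j, p j • u j‖ ^ 2 := by
  set m := ∑ j, p j • u j with hm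
  have cross : ∑ i, p i * ⟪x - m, u i - m⟫ = 0 := by
    simp only [← real_inner_smul_right, ← inner_sum, sum_smul_sub hp, ← hm, sub_self,
      inner_zero_right]
  calc ∑ i, p i * ‖x - u i‖ ^ 2
      = ∑ i, (p i * ‖x - m‖ ^ 2 - 2 * (p i * ⟪x - m, u i - m⟫) + p i * ‖u i - m‖ ^ 2) := by
        refine sum_congr rfl fun i _ => ?_
        rw [← sub_sub_sub_cancel_right x (u i) m, norm_sub_sq_real]
        ring
    _ = ‖x - m‖ ^ 2 + ∑ i, p i * ‖u i - m‖ ^ 2 := by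
        rw [sum_add_distrib, sum_sub_distrib, ← sum_mul, ← mul_sum, hp, cross]
        ring

lemma two_mul_inner_mean_sub_mean_sub {E : Type*} [NormedAddCommGroup E] [InnerProductSpace ℝ E]
    (hp : ∑ i, p i = 1) (u : ι → E) (x : E) (k : ι) :
    2 * ⟪∑ j, p j • u j - x, ∑ j, p j • u j - u k⟫ =
      (‖u k - ∑ j, p j • u j‖ ^ 2 - ∑ i, p i * ‖u i - ∑ j, p j • u j‖ ^ 2) -
        (‖x - u k‖ ^ 2 - ∑ i, p i * ‖x - u i‖ ^ 2) := by
  rw [sum_mul_norm_sub_sq hp u x]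
  generalize ∑ j, p j • u j = m
  rw [norm_sub_rev x (u k), ← sub_sub_sub_cancel_left x (u k) m, norm_sub_sq_real (m - x),
    norm_sub_rev (u k) m, norm_sub_rev x m]
  ring

lemma sum_mul_convexOn_sub_mean_le {E : Type*} [AddCommGroup E] [Module ℝ E] {φ : E → ℝ}
    (hφ : ConvexOn ℝ Set.univ φ) (hp : p ∈ stdSimplex ℝ ι) (u : ι → E) :
    ∑ i, p i * φ (u i - ∑ j, p j • u j) ≤ ∑ i, ∑ j, p i * p j * φ (u i - u j) := by
  simp only [mul_assoc, ← mul_sum]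
  gcongr with i
  · exact hp.1 i
  · have h := hφ.map_sum_le (t := univ) (p := fun j => u i - u j) (fun j _ => hp.1 j) hp.2
      fun _ _ => Set.mem_univ _
    simpa only [sum_smul_sub_left hp.2, smul_eq_mul] using h

lemma convexOn_exp_norm_sq_div {E : Type*} [SeminormedAddCommGroup E] [NormedSpace ℝ E] {c : ℝ}
    (hc : 0 ≤ c) : ConvexOn ℝ Set.univ fun v : E => exp (‖v‖ ^ 2 / c) := by
  have hsq : ConvexOn ℝ Set.univ fun v : E => ‖v‖ ^ 2 / c := by
    simpa only [div_eq_inv_mul, smul_eq_mul, Pi.pow_apply] using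
      (convexOn_univ_norm.pow (fun _ _ => norm_nonneg _) 2).smul (inv_nonneg.2 hc)
  exact ⟨convex_univ, fun x hx y hy a b ha hb hab =>
    (exp_le_exp.2 (hsq.2 hx hy ha hb hab)).trans
      (convexOn_exp.2 (Set.mem_univ _) (Set.mem_univ _) ha hb hab)⟩

end WeightedSums

section Gaussian

variable {d : ℕ} {v : ℝ}

lemma gaussV_pos (hv : 0 < v) (m x : EuclideanSpace ℝ (Fin d)) : 0 < gaussV d v m x := by
  unfold gaussV
  positivity

lemma integral_gaussV (hv : 0 < v) (m : EuclideanSpace ℝ (Fin d)) : ∫ x, gaussV d v m x = 1 := by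
  have hexp : ∫ y : EuclideanSpace ℝ (Fin d), exp (-‖y‖ ^ 2 / (2 * v)) =
      (2 * π * v) ^ ((d : ℝ) / 2) := by
    have h := GaussianFourier.integral_rexp_neg_mul_sq_norm (V := EuclideanSpace ℝ (Fin d))
      (inv_pos.2 (mul_pos two_pos hv))
    rw [finrank_euclideanSpace_fin, div_inv_eq_mul] at h
    simpa only [neg_mul, inv_mul_eq_div, neg_div, mul_left_comm, mul_assoc] using h
  simp only [gaussV]
  rw [integral_const_mul, integral_sub_right_eq_self
    (fun y : EuclideanSpace ℝ (Fin d) => exp (-‖y‖ ^ 2 / (2 * v))) m, hexp,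
    ← rpow_add (by positivity), neg_div, neg_add_cancel, rpow_zero]

lemma integrable_gaussV (hv : 0 < v) (m : EuclideanSpace ℝ (Fin d)) :
    Integrable (gaussV d v m) :=
  .of_integral_ne_zero (by rw [integral_gaussV hv]; exact one_ne_zero)

lemma gaussV_mul_gaussV (m₁ m₂ x : EuclideanSpace ℝ (Fin d)) :
    gaussV d v m₁ x * gaussV d v m₂ x =
      gaussV d v (midpoint ℝ m₁ m₂) x ^ 2 * exp (-‖m₁ - m₂‖ ^ 2 / (4 * v)) := by
  have apollonius :
      ‖x - m₁‖ ^ 2 + ‖x - m₂‖ ^ 2 = 2 * (‖x - midpoint ℝ m₁ m₂‖ ^ 2 + (‖m₁ - m₂‖ / 2) ^ 2) := by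
    simpa only [dist_eq_norm] using
      EuclideanGeometry.dist_sq_add_dist_sq_eq_two_mul_dist_midpoint_sq_add_half_dist_sq x m₁ m₂
  simp only [gaussV, mul_mul_mul_comm _ (exp _), mul_pow, ← pow_two, mul_assoc, ← exp_add,
    ← exp_nat_mul]
  congr 2
  linear_combination -(2 * v)⁻¹ * apollonius

end Gaussian

/-- The conditional mean of the component centre given `X_t = x`; the score is the difference of
this point and `x`. -/
noncomputable def posteriorMean (d K : ℕ) (w : Fin K → ℝ) (μ : Fin K → EuclideanSpace ℝ (Fin d))
    (abar : ℝ) (x : EuclideanSpace ℝ (Fin d)) : EuclideanSpace ℝ (Fin d) :=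
  ∑ k, postWeight d K w μ abar k x • √abar • μ k

/-- The function of `k` whose centring under the posterior weights is `-ζ_k / (1 - α_t)`. -/
noncomputable def tiltExponent (d K : ℕ) (w : Fin K → ℝ) (μ : Fin K → EuclideanSpace ℝ (Fin d))
    (abar a : ℝ) (k : Fin K) (x : EuclideanSpace ℝ (Fin d)) : ℝ :=
  a⁻¹ * log (postWeight d K w μ abar k x / w k) -
    (2 * a ^ 2)⁻¹ * ‖√abar • μ k - posteriorMean d K w μ abar x‖ ^ 2

/-- The random variable to which Markov's inequality is applied: a posterior exponential moment of
the squared distance of two component centres, plus the posterior mean of the inverse weight. -/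
noncomputable def posteriorMoment (d K : ℕ) (w : Fin K → ℝ)
    (μ : Fin K → EuclideanSpace ℝ (Fin d)) (abar : ℝ) (x : EuclideanSpace ℝ (Fin d)) : ℝ :=
  ∑ i, ∑ j, postWeight d K w μ abar i x * postWeight d K w μ abar j x *
      exp (‖√abar • μ i - √abar • μ j‖ ^ 2 / 8) +
    ∑ k, postWeight d K w μ abar k x / w k

/-- The sum of the standard Gaussian densities centred at all pairwise midpoints of the component
centres and at the component centres themselves, an integrable majorant of
`mixDensity * posteriorMoment`. -/
noncomputable def midpointEnvelope (d K : ℕ) (μ : Fin K → EuclideanSpace ℝ (Fin d)) (abar : ℝ)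
    (x : EuclideanSpace ℝ (Fin d)) : ℝ :=
  ∑ i, ∑ j, gaussV d 1 (midpoint ℝ (√abar • μ i) (√abar • μ j)) x +
    ∑ k, gaussV d 1 (√abar • μ k) x

section Mixture

variable {d K : ℕ} {w : Fin K → ℝ} {μ : Fin K → EuclideanSpace ℝ (Fin d)} {abar : ℝ}
  {x : EuclideanSpace ℝ (Fin d)}

lemma mixDensity_nonneg (hw : ∀ k, 0 ≤ w k) : 0 ≤ mixDensity d K w μ abar x :=
  sum_nonneg fun k _ => mul_nonneg (hw k) (gaussV_pos one_pos _ _).le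

lemma integrable_mixDensity : Integrable (mixDensity d K w μ abar) :=
  integrable_finsetSum _ fun _ _ => (integrable_gaussV one_pos _).const_mul _

lemma integral_mixDensity : ∫ x, mixDensity d K w μ abar x = ∑ k, w k := by
  simp only [mixDensity]
  rw [integral_finsetSum _ fun _ _ => (integrable_gaussV one_pos _).const_mul _]
  simp only [integral_const_mul, integral_gaussV one_pos, mul_one]

lemma integrable_midpointEnvelope : Integrable (midpointEnvelope d K μ abar) :=
  (integrable_finsetSum _ fun _ _ => integrable_finsetSum _ fun _ _ =>
    integrable_gaussV one_pos _).add (integrable_finsetSum _ fun _ _ => integrable_gaussV one_pos _)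

lemma midpointEnvelope_nonneg : 0 ≤ midpointEnvelope d K μ abar x :=
  add_nonneg
    (sum_nonneg fun _ _ => sum_nonneg fun _ _ => (gaussV_pos one_pos _ _).le)
    (sum_nonneg fun _ _ => (gaussV_pos one_pos _ _).le)

lemma integral_midpointEnvelope : ∫ x, midpointEnvelope d K μ abar x = (K : ℝ) ^ 2 + K := by
  have pairs (i : Fin K) : Integrable fun x =>
      ∑ j, gaussV d 1 (midpoint ℝ (√abar • μ i) (√abar • μ j)) x :=
    integrable_finsetSum _ fun _ _ => integrable_gaussV one_pos _
  simp only [midpointEnvelope]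
  rw [integral_add (integrable_finsetSum _ fun i _ => pairs i)
      (integrable_finsetSum _ fun _ _ => integrable_gaussV one_pos _),
    integral_finsetSum _ fun i _ => pairs i,
    integral_finsetSum _ fun _ _ => integrable_gaussV one_pos _]
  simp only [integral_finsetSum _ fun _ _ => integrable_gaussV one_pos _, integral_gaussV one_pos,
    sum_const, card_univ, Fintype.card_fin, nsmul_eq_mul, mul_one, sq]

lemma postWeight_eq_div_mixDensity (k : Fin K) :
    postWeight d K w μ abar k x = w k * gaussV d 1 (√abar • μ k) x / mixDensity d K w μ abar x := by
  have hc : (2 * π) ^ (-(d : ℝ) / 2) ≠ 0 := by positivity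
  simp only [postWeight, mixDensity, gaussV, mul_one, mul_left_comm (w _), ← mul_sum]
  rw [mul_div_mul_left _ _ hc]

lemma mixDensity_pos [NeZero K] (hw : ∀ k, 0 < w k) : 0 < mixDensity d K w μ abar x :=
  sum_pos (fun k _ => mul_pos (hw k) (gaussV_pos one_pos _ _)) univ_nonempty

lemma mixDensity_mul_postWeight [NeZero K] (hw : ∀ k, 0 < w k) (k : Fin K) :
    mixDensity d K w μ abar x * postWeight d K w μ abar k x =
      w k * gaussV d 1 (√abar • μ k) x := by
  rw [postWeight_eq_div_mixDensity, mul_div_cancel₀ _ (mixDensity_pos hw).ne']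

lemma postWeight_pos (hw : ∀ k, 0 < w k) (k : Fin K) : 0 < postWeight d K w μ abar k x :=
  have : NeZero K := ⟨k.pos.ne'⟩
  (postWeight_eq_div_mixDensity k).symm ▸
    div_pos (mul_pos (hw k) (gaussV_pos one_pos _ _)) (mixDensity_pos hw)

lemma postWeight_mem_stdSimplex [NeZero K] (hw : ∀ k, 0 < w k) :
    (fun k => postWeight d K w μ abar k x) ∈ stdSimplex ℝ (Fin K) := by
  refine ⟨fun k => (postWeight_pos hw k).le, ?_⟩
  simp only [postWeight_eq_div_mixDensity, ← sum_div]
  exact div_self (mixDensity_pos hw).ne'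

lemma log_postWeight_div (hw : ∀ k, 0 < w k) (k : Fin K) :
    log (postWeight d K w μ abar k x / w k) =
      -‖x - √abar • μ k‖ ^ 2 / 2 - log (∑ i, w i * exp (-‖x - √abar • μ i‖ ^ 2 / 2)) := by
  have : NeZero K := ⟨k.pos.ne'⟩
  have hsum : 0 < ∑ i, w i * exp (-‖x - √abar • μ i‖ ^ 2 / 2) :=
    sum_pos (fun i _ => mul_pos (hw i) (exp_pos _)) univ_nonempty
  rw [postWeight, div_right_comm, mul_div_cancel_left₀ _ (hw k).ne',
    log_div (exp_pos _).ne' hsum.ne', log_exp]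

lemma gmmScore_eq_posteriorMean_sub :
    gmmScore d K w μ abar x = posteriorMean d K w μ abar x - x := by
  simp only [gmmScore, posteriorMean, smul_sum, smul_comm √abar, sub_eq_neg_add]

lemma trace_one_add_gmmJac [NeZero K] (hw : ∀ k, 0 < w k) (habar : 0 ≤ abar) :
    Matrix.trace (1 + gmmJac d K w μ abar x) =
      ∑ k, postWeight d K w μ abar k x * ‖√abar • μ k - posteriorMean d K w μ abar x‖ ^ 2 := by
  have trace_eq : Matrix.trace (1 + gmmJac d K w μ abar x) =
      abar * (∑ k, postWeight d K w μ abar k x * ‖μ k‖ ^ 2 -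
        ‖∑ k, postWeight d K w μ abar k x • μ k‖ ^ 2) := by
    simp only [Matrix.trace, Matrix.diag_apply, Matrix.add_apply, Matrix.one_apply_eq, gmmJac,
      Matrix.of_apply, if_true, add_neg_cancel_left, ← mul_sum, sum_sub_distrib,
      EuclideanSpace.real_norm_sq_eq, WithLp.ofLp_sum, Finset.sum_apply, PiLp.smul_apply,
      smul_eq_mul, ← sq]
    rw [sum_comm]
    simp only [mul_sum]
  have variance := sum_mul_norm_sub_sq
    (postWeight_mem_stdSimplex (μ := μ) (abar := abar) (x := x) hw).2 (fun k => √abar • μ k) 0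
  simp only [zero_sub, norm_neg, smul_comm _ √abar, ← smul_sum, norm_smul, mul_pow,
    norm_eq_abs, sq_abs, sq_sqrt habar, mul_left_comm _ abar, ← mul_sum] at variance
  rw [trace_eq, mul_sub, variance, add_sub_cancel_left]
  simp only [posteriorMean, smul_comm _ √abar, ← smul_sum]

lemma zeta_eq_sub_mean [NeZero K] (hw : ∀ k, 0 < w k) {a : ℝ} (ha : a ≠ 0) (k : Fin K) :
    zeta d K w μ abar a k x =
      (1 - a) * ((2 * a)⁻¹ * (‖x - √abar • μ k‖ ^ 2 -
          ∑ i, postWeight d K w μ abar i x * ‖x - √abar • μ i‖ ^ 2) +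
        (2 * a ^ 2)⁻¹ * (‖√abar • μ k - posteriorMean d K w μ abar x‖ ^ 2 -
          ∑ i, postWeight d K w μ abar i x *
            ‖√abar • μ i - posteriorMean d K w μ abar x‖ ^ 2)) := by
  have hp := (postWeight_mem_stdSimplex (μ := μ) (abar := abar) (x := x) hw).2
  have inner_eq := two_mul_inner_mean_sub_mean_sub hp (fun k => √abar • μ k) x k
  rw [zeta, gmmScore_eq_posteriorMean_sub]
  simp only [smul_sub √abar, sum_smul_sub hp]
  rw [← posteriorMean] at inner_eq ⊢
  rw [eq_div_of_mul_eq two_ne_zero ((mul_comm _ _).trans inner_eq)]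
  field_simp
  ring

lemma zeta_eq_sum_mul_tiltExponent_sub [NeZero K] (hw : ∀ k, 0 < w k) {a : ℝ} (ha : a ≠ 0)
    (k : Fin K) :
    zeta d K w μ abar a k x = (1 - a) * (∑ i, postWeight d K w μ abar i x *
      tiltExponent d K w μ abar a i x - tiltExponent d K w μ abar a k x) := by
  have hp := (postWeight_mem_stdSimplex (μ := μ) (abar := abar) (x := x) hw).2
  rw [zeta_eq_sub_mean hw ha]
  simp only [tiltExponent, log_postWeight_div hw]
  generalize log (∑ i, w i * exp (-‖x - √abar • μ i‖ ^ 2 / 2)) = c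
  have mean (D q : Fin K → ℝ) :
      ∑ i, postWeight d K w μ abar i x * (a⁻¹ * (-D i / 2 - c) - (2 * a ^ 2)⁻¹ * q i) =
        a⁻¹ * (-(∑ i, postWeight d K w μ abar i x * D i) / 2 - c) -
          (2 * a ^ 2)⁻¹ * ∑ i, postWeight d K w μ abar i x * q i := by
    have (i : Fin K) :
        postWeight d K w μ abar i x * (a⁻¹ * (-D i / 2 - c) - (2 * a ^ 2)⁻¹ * q i) =
          -(a⁻¹ / 2) * (postWeight d K w μ abar i x * D i) -
            a⁻¹ * c * postWeight d K w μ abar i x -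
            (2 * a ^ 2)⁻¹ * (postWeight d K w μ abar i x * q i) := by ring
    simp only [this, sum_sub_distrib, ← mul_sum, hp]
    ring
  rw [mean]
  field_simp
  ring

lemma sum_exp_norm_sq_add_sum_div_le_posteriorMoment [NeZero K] (hw : ∀ k, 0 < w k) :
    ∑ k, postWeight d K w μ abar k x *
        exp (‖√abar • μ k - posteriorMean d K w μ abar x‖ ^ 2 / 8) +
      ∑ k, postWeight d K w μ abar k x / w k ≤ posteriorMoment d K w μ abar x :=
  add_le_add_left (sum_mul_convexOn_sub_mean_le (convexOn_exp_norm_sq_div (by norm_num))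
    (postWeight_mem_stdSimplex hw) fun k => √abar • μ k) _

lemma trace_one_add_gmmJac_le_log_posteriorMoment [NeZero K] (hw : ∀ k, 0 < w k)
    (habar : 0 ≤ abar) :
    Matrix.trace (1 + gmmJac d K w μ abar x) ≤ 8 * log (posteriorMoment d K w μ abar x) := by
  have exp_trace_le : exp (Matrix.trace (1 + gmmJac d K w μ abar x) / 8) ≤
      posteriorMoment d K w μ abar x := by
    rw [trace_one_add_gmmJac hw habar, sum_div]
    simp only [mul_div_assoc]
    refine (exp_sum_mul_le (postWeight_mem_stdSimplex hw) _).trans ?_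
    exact (le_add_of_nonneg_right (sum_nonneg fun k _ => (div_pos (postWeight_pos hw k)
      (hw k)).le)).trans (sum_exp_norm_sq_add_sum_div_le_posteriorMoment hw)
  linarith [(le_log_iff_exp_le ((exp_pos _).trans_le exp_trace_le)).2 exp_trace_le]

lemma posteriorMoment_pos [NeZero K] (hw : ∀ k, 0 < w k) : 0 < posteriorMoment d K w μ abar x :=
  add_pos_of_nonneg_of_pos
    (sum_nonneg fun i _ => sum_nonneg fun j _ => mul_nonneg
      (mul_pos (postWeight_pos hw i) (postWeight_pos hw j)).le (exp_pos _).le)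
    (sum_pos (fun k _ => div_pos (postWeight_pos hw k) (hw k)) univ_nonempty)

lemma postWeight_mul_exp_abs_log_le [NeZero K] (hw : ∀ k, 0 < w k) (k : Fin K) :
    postWeight d K w μ abar k x * exp |log (postWeight d K w μ abar k x / w k)| ≤
      postWeight d K w μ abar k x / w k + w k := by
  have hp := postWeight_pos (μ := μ) (abar := abar) (x := x) hw k
  have hp₁ := (mem_Icc_of_mem_stdSimplex
    (postWeight_mem_stdSimplex (μ := μ) (abar := abar) (x := x) hw) k).2
  have hwk := hw k
  generalize postWeight d K w μ abar k x = p at *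
  calc p * exp |log (p / w k)|
      ≤ p * (exp (log (p / w k)) + exp (-log (p / w k))) := by
        gcongr
        exact exp_abs_le _
    _ = p * (p / w k) + w k := by
        rw [exp_neg, exp_log (by positivity), inv_div, mul_add, mul_div_cancel₀ _ hp.ne']
    _ ≤ p / w k + w k := by
        gcongr
        exact mul_le_of_le_one_left (by positivity) hp₁

lemma exp_abs_tiltExponent_div_le {a : ℝ} (ha : 15 / 16 ≤ a) (k : Fin K) :
    exp |tiltExponent d K w μ abar a k x / 16| ≤
      exp |log (postWeight d K w μ abar k x / w k)| +
        exp (‖√abar • μ k - posteriorMean d K w μ abar x‖ ^ 2 / 8) := by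
  have ha₁ : a⁻¹ ≤ 2 := inv_le_of_inv_le₀ (by norm_num) (by linarith)
  have ha₂ : (2 * a ^ 2)⁻¹ ≤ 1 := inv_le_one_of_one_le₀ (by nlinarith)
  rw [tiltExponent]
  set ℓ := log (postWeight d K w μ abar k x / w k)
  set q := ‖√abar • μ k - posteriorMean d K w μ abar x‖ ^ 2
  have abs_le : |a⁻¹ * ℓ - (2 * a ^ 2)⁻¹ * q| ≤ 2 * |ℓ| + 1 * q :=
    (abs_sub _ _).trans (by
      rw [abs_mul, abs_mul, abs_of_nonneg (by positivity : 0 ≤ a⁻¹),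
        abs_of_nonneg (by positivity : 0 ≤ (2 * a ^ 2)⁻¹), abs_of_nonneg (by positivity : 0 ≤ q)]
      gcongr)
  calc exp |(a⁻¹ * ℓ - (2 * a ^ 2)⁻¹ * q) / 16| ≤ exp (|ℓ| / 2 + q / 16) := by
        rw [abs_div, abs_of_pos (by norm_num : (0 : ℝ) < 16)]
        exact exp_le_exp.2 (by linarith [abs_nonneg ℓ])
    _ ≤ exp |ℓ| + exp (q / 8) := by
        convert! exp_add_le_exp_two_mul_add (|ℓ| / 2) (q / 16) using 3 <;> ring

lemma sum_mul_exp_abs_tiltExponent_div_le [NeZero K] (hw : ∀ k, 0 < w k) (hws : ∑ k, w k = 1)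
    {a : ℝ} (ha : 15 / 16 ≤ a) :
    ∑ k, postWeight d K w μ abar k x * exp |tiltExponent d K w μ abar a k x / 16| ≤
      posteriorMoment d K w μ abar x + 1 := by
  set p := fun k => postWeight d K w μ abar k x
  set q := fun k => ‖√abar • μ k - posteriorMean d K w μ abar x‖ ^ 2
  calc ∑ k, p k * exp |tiltExponent d K w μ abar a k x / 16|
      ≤ ∑ k, ((p k / w k + w k) + p k * exp (q k / 8)) := by
        refine sum_le_sum fun k _ => ?_
        refine (mul_le_mul_of_nonneg_left (exp_abs_tiltExponent_div_le ha k)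
          (postWeight_pos hw k).le).trans ?_
        rw [mul_add]
        exact add_le_add_left (postWeight_mul_exp_abs_log_le hw k) _
    _ = (∑ k, p k * exp (q k / 8) + ∑ k, p k / w k) + 1 := by
        rw [sum_add_distrib, sum_add_distrib, hws]
        ring
    _ ≤ posteriorMoment d K w μ abar x + 1 := by
        gcongr
        exact sum_exp_norm_sq_add_sum_div_le_posteriorMoment hw

lemma sum_mul_exp_neg_zeta_le [NeZero K] (hw : ∀ k, 0 < w k) (hws : ∑ k, w k = 1) {a N : ℝ}
    (ha₀ : 15 / 16 ≤ a) (ha₁ : a ≤ 1) (hN : 1 ≤ N)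
    (hmom : posteriorMoment d K w μ abar x + 1 ≤ exp N) :
    ∑ k, postWeight d K w μ abar k x * exp (-zeta d K w μ abar a k x) ≤
      exp (3 * 2 ^ 10 * (1 - a) ^ 2 * N ^ 2) := by
  have rescale (k : Fin K) : -zeta d K w μ abar a k x =
      16 * (1 - a) * (tiltExponent d K w μ abar a k x / 16 -
        ∑ j, postWeight d K w μ abar j x * (tiltExponent d K w μ abar a j x / 16)) := by
    simp only [zeta_eq_sum_mul_tiltExponent_sub hw (by linarith : a ≠ 0), ← mul_div_assoc,
      ← sum_div]
    ring
  simp only [rescale]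
  refine (sum_mul_exp_mul_sub_mean_le (postWeight_mem_stdSimplex hw) hN (by linarith)
    (by linarith) ((sum_mul_exp_abs_tiltExponent_div_le hw hws ha₀).trans hmom)).trans_eq ?_
  congr 1
  ring

lemma mem_Eset_of_posteriorMoment_le [NeZero K] (hw : ∀ k, 0 < w k) (hws : ∑ k, w k = 1)
    (habar : 0 ≤ abar) {a C₁ C₂ : ℝ} (ha₀ : 15 / 16 ≤ a) (ha₁ : a ≤ 1) (hC₁ : 24 ≤ C₁)
    (hC₂ : 3 * 2 ^ 14 ≤ C₂) {T : ℕ} (hKT : 2 ≤ (K : ℝ) * T)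
    (hmom : posteriorMoment d K w μ abar x ≤ ((K : ℝ) * T) ^ 3) :
    x ∈ Eset d K T w μ abar a C₁ C₂ := by
  have hpos := posteriorMoment_pos (μ := μ) (abar := abar) (x := x) hw
  set R := (K : ℝ) * T
  have hlog : 1 / 4 ≤ log R := by
    linarith [log_two_gt_d9, log_le_log two_pos hKT]
  constructor
  · calc Matrix.trace (1 + gmmJac d K w μ abar x)
        ≤ 8 * log (posteriorMoment d K w μ abar x) :=
          trace_one_add_gmmJac_le_log_posteriorMoment hw habar
      _ ≤ 8 * log (R ^ 3) := by gcongr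
      _ = 24 * log R := by rw [log_pow]; push_cast; ring
      _ ≤ C₁ * log R := by gcongr
  · have hexp : posteriorMoment d K w μ abar x + 1 ≤ exp (4 * log R) := by
      rw [mul_comm, exp_mul, exp_log (by positivity)]
      norm_cast
      nlinarith [pow_le_pow_left₀ two_pos.le hKT 3]
    refine (sum_mul_exp_neg_zeta_le hw hws ha₀ ha₁ (by linarith) hexp).trans (exp_le_exp.2 ?_)
    calc 3 * 2 ^ 10 * (1 - a) ^ 2 * (4 * log R) ^ 2
        = 3 * 2 ^ 14 * (1 - a) ^ 2 * log R ^ 2 := by ring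
      _ ≤ C₂ * (1 - a) ^ 2 * log R ^ 2 := by gcongr

lemma mixDensity_mul_postWeight_mul_le [NeZero K] (hw : ∀ k, 0 < w k) (hws : ∑ k, w k = 1)
    (i j : Fin K) :
    mixDensity d K w μ abar x * (postWeight d K w μ abar i x * postWeight d K w μ abar j x *
        exp (‖√abar • μ i - √abar • μ j‖ ^ 2 / 8)) ≤
      gaussV d 1 (midpoint ℝ (√abar • μ i) (√abar • μ j)) x := by
  have hp := postWeight_mem_stdSimplex (μ := μ) (abar := abar) (x := x) hw
  have hp₁ (k : Fin K) := (mem_Icc_of_mem_stdSimplex hp k).2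
  have hw₁ (k : Fin K) := (mem_Icc_of_mem_stdSimplex ⟨fun i => (hw i).le, hws⟩ k).2
  set f := mixDensity d K w μ abar x
  set p := fun k => postWeight d K w μ abar k x
  set g := fun k => gaussV d 1 (√abar • μ k) x
  have hfp (k : Fin K) : f * p k = w k * g k := mixDensity_mul_postWeight hw k
  have hg (k : Fin K) : 0 < g k := gaussV_pos one_pos _ _
  have product : g i * g j * exp (‖√abar • μ i - √abar • μ j‖ ^ 2 / 8) ^ 2 =
      gaussV d 1 (midpoint ℝ (√abar • μ i) (√abar • μ j)) x ^ 2 := by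
    rw [gaussV_mul_gaussV, mul_assoc, ← exp_nat_mul, ← exp_add, (exp_eq_one_iff _).2, mul_one]
    push_cast
    ring
  refine le_of_sq_le_sq ?_ (gaussV_pos one_pos _ _).le
  rw [← product]
  calc (f * (p i * p j * exp (‖√abar • μ i - √abar • μ j‖ ^ 2 / 8))) ^ 2
      = (w i * p i) * (w j * p j) *
          (g i * g j * exp (‖√abar • μ i - √abar • μ j‖ ^ 2 / 8) ^ 2) := by
        linear_combination (p i * p j * exp (‖√abar • μ i - √abar • μ j‖ ^ 2 / 8) ^ 2) *
          (f * p j * hfp i + w i * g i * hfp j)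
    _ ≤ g i * g j * exp (‖√abar • μ i - √abar • μ j‖ ^ 2 / 8) ^ 2 := by
        refine mul_le_of_le_one_left (mul_nonneg (mul_pos (hg i) (hg j)).le (sq_nonneg _)) ?_
        exact mul_le_one₀ (mul_le_one₀ (hw₁ i) (hp.1 i) (hp₁ i))
          (mul_nonneg (hw j).le (hp.1 j)) (mul_le_one₀ (hw₁ j) (hp.1 j) (hp₁ j))

lemma mixDensity_mul_posteriorMoment_le [NeZero K] (hw : ∀ k, 0 < w k) (hws : ∑ k, w k = 1) :
    mixDensity d K w μ abar x * posteriorMoment d K w μ abar x ≤ midpointEnvelope d K μ abar x := by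
  simp only [posteriorMoment, midpointEnvelope, mul_add, mul_sum]
  gcongr with i _ j _ k
  · exact mixDensity_mul_postWeight_mul_le hw hws i j
  · rw [← mul_div_assoc, mixDensity_mul_postWeight hw, mul_div_cancel_left₀ _ (hw k).ne']

lemma setIntegral_mixDensity_le_one (hw : ∀ k, 0 ≤ w k) (hws : ∑ k, w k = 1)
    (s : Set (EuclideanSpace ℝ (Fin d))) : ∫ x in s, mixDensity d K w μ abar x ≤ 1 := by
  rw [← hws, ← integral_mixDensity (d := d) (μ := μ) (abar := abar)]
  exact setIntegral_le_integral integrable_mixDensity (.of_forall fun _ => mixDensity_nonneg hw)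

lemma setIntegral_compl_Eset_le [NeZero K] (hw : ∀ k, 0 < w k) (hws : ∑ k, w k = 1)
    (habar : 0 ≤ abar) {a C₁ C₂ : ℝ} (ha₀ : 15 / 16 ≤ a) (ha₁ : a ≤ 1) (hC₁ : 24 ≤ C₁)
    (hC₂ : 3 * 2 ^ 14 ≤ C₂) {T : ℕ} (hT : 2 ≤ T) :
    ∫ x in (Eset d K T w μ abar a C₁ C₂)ᶜ, mixDensity d K w μ abar x ≤ 2 / (T : ℝ) ^ 3 := by
  have hK : (1 : ℝ) ≤ K := Nat.one_le_cast.2 NeZero.one_le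
  have hT' : (2 : ℝ) ≤ T := by exact_mod_cast hT
  have large_of_notMem (x) (hx : x ∈ (Eset d K T w μ abar a C₁ C₂)ᶜ) :
      (K : ℝ) ^ 2 * T ^ 3 ≤ posteriorMoment d K w μ abar x := by
    contrapose! hx
    refine Set.notMem_compl_iff.2 (mem_Eset_of_posteriorMoment_le hw hws habar ha₀ ha₁ hC₁ hC₂
      (by nlinarith) (hx.le.trans ?_))
    rw [mul_pow]
    gcongr
    norm_num
  calc ∫ x in (Eset d K T w μ abar a C₁ C₂)ᶜ, mixDensity d K w μ abar x
      ≤ (∫ x, midpointEnvelope d K μ abar x) / ((K : ℝ) ^ 2 * T ^ 3) := by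
        refine setIntegral_le_integral_div integrable_mixDensity integrable_midpointEnvelope
          (fun _ => midpointEnvelope_nonneg) (by positivity) fun x hx => ?_
        rw [mul_comm]
        exact (mul_le_mul_of_nonneg_left (large_of_notMem x hx) (mixDensity_pos hw).le).trans
          (mixDensity_mul_posteriorMoment_le hw hws)
    _ ≤ 2 * (K : ℝ) ^ 2 / ((K : ℝ) ^ 2 * T ^ 3) := by
        rw [integral_midpointEnvelope]
        gcongr
        nlinarith
    _ = 2 / (T : ℝ) ^ 3 := by field_simp

end Mixture

section Schedule

/-- One backward step of the learning-rate recursion, which takes `ᾱ_t` to `ᾱ_{t-1}` when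
`x = c₁ log T / T`. -/
def logisticStep (x y : ℝ) : ℝ :=
  y + x * y * (1 - y)

variable {x y : ℝ}

lemma mapsTo_logisticStep (hx₀ : 0 ≤ x) (hx₁ : x ≤ 1) :
    Set.MapsTo (logisticStep x) (Set.Ioc 0 1) (Set.Ioc 0 1) := by
  rintro y ⟨hy₀, hy₁⟩
  have hxy : x * y ≤ 1 := mul_le_one₀ hx₁ hy₀.le hy₁
  constructor
  · have : 0 ≤ x * y * (1 - y) := mul_nonneg (by positivity) (sub_nonneg.2 hy₁)
    rw [logisticStep]
    linarith
  · have : 0 ≤ (1 - x * y) * (1 - y) := mul_nonneg (sub_nonneg.2 hxy) (sub_nonneg.2 hy₁)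
    rw [logisticStep]
    linarith

lemma iterate_logisticStep_mem (hx₀ : 0 ≤ x) (hx₁ : x ≤ 1) (hy : y ∈ Set.Ioc (0 : ℝ) 1) (n : ℕ) :
    (logisticStep x)^[n] y ∈ Set.Ioc (0 : ℝ) 1 :=
  (mapsTo_logisticStep hx₀ hx₁).iterate n hy

-- Each step multiplies the odds `y / (1 - y)` by at least `1 + x`.
lemma mul_pow_mul_one_sub_iterate_logisticStep_le (hx₀ : 0 ≤ x) (hx₁ : x ≤ 1)
    (hy : y ∈ Set.Ioc (0 : ℝ) 1) (n : ℕ) :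
    y * (1 + x) ^ n * (1 - (logisticStep x)^[n] y) ≤ (logisticStep x)^[n] y := by
  induction n with
  | zero =>
    simp only [pow_zero, mul_one, Function.iterate_zero, id_eq]
    nlinarith [hy.1]
  | succ n ih =>
    obtain ⟨hz₀, hz₁⟩ := iterate_logisticStep_mem hx₀ hx₁ hy n
    rw [Function.iterate_succ_apply']
    generalize (logisticStep x)^[n] y = z at *
    have hxz : 0 ≤ 1 - x * z := by nlinarith
    calc y * (1 + x) ^ (n + 1) * (1 - logisticStep x z)
        = y * (1 + x) ^ n * (1 - z) * ((1 + x) * (1 - x * z)) := by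
          rw [logisticStep]
          ring
      _ ≤ z * ((1 + x) * (1 - x * z)) := by gcongr
      _ = logisticStep x z - (x * z) ^ 2 := by
          rw [logisticStep]
          ring
      _ ≤ logisticStep x z := sub_le_self _ (sq_nonneg _)

lemma div_logisticStep_mem (hx₀ : 0 ≤ x) (hy : y ∈ Set.Ioc (0 : ℝ) 1) :
    y / logisticStep x y ∈ Set.Icc (1 - x) 1 := by
  obtain ⟨hy₀, hy₁⟩ := hy
  have hstep : y ≤ logisticStep x y :=
    le_add_of_nonneg_right (mul_nonneg (by positivity) (sub_nonneg.2 hy₁))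
  refine ⟨(le_div_iff₀ (hy₀.trans_le hstep)).2 (sub_nonneg.1 ?_),
    (div_le_one (hy₀.trans_le hstep)).2 hstep⟩
  calc 0 ≤ x * y * (x * (1 - y) + y) :=
        mul_nonneg (by positivity) (add_nonneg (mul_nonneg hx₀ (sub_nonneg.2 hy₁)) hy₀.le)
    _ = y - (1 - x) * logisticStep x y := by
        rw [logisticStep]
        ring

variable {T : ℕ} {b α : ℕ → ℝ}

lemma eq_iterate_logisticStep
    (hrec : ∀ t, 2 ≤ t → t ≤ T → b (t - 1) = logisticStep x (b t)) {t n : ℕ} (ht : 1 ≤ t)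
    (htn : t + n = T) : b t = (logisticStep x)^[n] (b T) := by
  induction n generalizing t with
  | zero => rw [← htn]; rfl
  | succ n ih =>
    rw [Function.iterate_succ_apply', ← ih (by omega : 1 ≤ t + 1) (by omega),
      ← hrec (t + 1) (by omega) (by omega), Nat.add_sub_cancel]

lemma cumulative_mem_and_rate_mem {δ : ℝ} (hx₀ : 0 ≤ x) (hxδ : x ≤ δ) (hδ : δ ≤ 1)
    (hbT : b T ∈ Set.Ioc (0 : ℝ) 1) (hgrowth : 1 - δ ≤ δ * (b T * (1 + x) ^ (T - 1)))
    (hrec : ∀ t, 2 ≤ t → t ≤ T → b (t - 1) = logisticStep x (b t))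
    (hα : ∀ t, 2 ≤ t → t ≤ T → α t = b t / b (t - 1)) (hα₁ : α 1 = b 1) {t : ℕ} (ht : 1 ≤ t)
    (htT : t ≤ T) : b t ∈ Set.Ioc (0 : ℝ) 1 ∧ α t ∈ Set.Icc (1 - δ) 1 := by
  have hx₁ := hxδ.trans hδ
  have hb : b t ∈ Set.Ioc (0 : ℝ) 1 := by
    rw [eq_iterate_logisticStep hrec ht (Nat.add_sub_of_le htT)]
    exact iterate_logisticStep_mem hx₀ hx₁ hbT _
  refine ⟨hb, ?_⟩
  rcases ht.eq_or_lt with rfl | ht₂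
  · have odds := mul_pow_mul_one_sub_iterate_logisticStep_le hx₀ hx₁ hbT (T - 1)
    rw [← eq_iterate_logisticStep hrec le_rfl (Nat.add_sub_of_le htT)] at odds
    rw [hα₁]
    refine ⟨?_, hb.2⟩
    have hpos : 0 < b T * (1 + x) ^ (T - 1) := mul_pos hbT.1 (by positivity)
    by_contra! hlt
    have := mul_lt_mul_of_pos_right (lt_sub_comm.1 hlt) hpos
    linarith
  · rw [hα t ht₂ htT, hrec t ht₂ htT]
    exact Set.Icc_subset_Icc_left (by linarith) (div_logisticStep_mem hx₀ hb)

end Schedule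

section Asymptotics

open Filter Topology

lemma tendsto_mul_log_div_atTop (c : ℝ) :
    Tendsto (fun T : ℕ => c * (log T / T)) atTop (𝓝 0) := by
  simpa only [mul_zero, Function.comp_def, id] using
    (isLittleO_log_id_atTop.tendsto_div_nhds_zero.comp tendsto_natCast_atTop_atTop).const_mul c

lemma tendsto_rpow_neg_mul_one_add_log_div_pow {c₀ c₁ : ℝ} (hc : c₀ < c₁) :
    Tendsto (fun T : ℕ => (T : ℝ) ^ (-c₀) * (1 + c₁ * (log T / T)) ^ (T - 1)) atTop atTop := by
  have hx := tendsto_mul_log_div_atTop c₁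
  have exponent : Tendsto (fun T : ℕ =>
      c₁ * (1 - (T : ℝ)⁻¹) / (1 + c₁ * (log T / T)) - c₀) atTop (𝓝 (c₁ - c₀)) := by
    simpa only [sub_zero, mul_one, add_zero, div_one, Pi.div_apply] using
      (((tendsto_inv_atTop_nhds_zero_nat.const_sub 1).const_mul c₁).div (hx.const_add 1)
        (by norm_num)).sub_const c₀
  have lower := tendsto_exp_atTop.comp
    ((tendsto_log_atTop.comp tendsto_natCast_atTop_atTop).atTop_mul_pos (sub_pos.2 hc) exponent)
  refine tendsto_atTop_mono' atTop ?_ lower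
  filter_upwards [eventually_ge_atTop 1, hx.eventually_const_lt (by norm_num : (-1 : ℝ) < 0)]
    with T hT hx
  have hT' : (0 : ℝ) < T := by exact_mod_cast hT
  simp only [Function.comp_apply]
  have hTX : T * (c₁ * (log T / T)) = c₁ * log T := by field_simp
  generalize c₁ * (log T / T) = X at hx hTX ⊢
  have hX : 0 < 1 + X := by linarith
  have exponent_eq : log T * (c₁ * (1 - (T : ℝ)⁻¹) / (1 + X) - c₀) =
      log T * -c₀ + (T - 1 : ℕ) * (1 - (1 + X)⁻¹) := by
    rw [Nat.cast_sub hT, Nat.cast_one]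
    field_simp
    linear_combination (1 - (T : ℝ)) * hTX
  calc exp (log T * (c₁ * (1 - (T : ℝ)⁻¹) / (1 + X) - c₀))
      = T ^ (-c₀) * exp ((T - 1 : ℕ) * (1 - (1 + X)⁻¹)) := by
        rw [exponent_eq, exp_add, rpow_def_of_pos hT']
    _ ≤ T ^ (-c₀) * exp ((T - 1 : ℕ) * log (1 + X)) := by
        gcongr
        exact one_sub_inv_le_log_of_pos hX
    _ = T ^ (-c₀) * (1 + X) ^ (T - 1) := by rw [exp_nat_mul, exp_log hX]

end Asymptotics

theorem stmt7_general {c₀ c₁ : ℝ} (hc₀ : 0 ≤ c₀) (hc : c₀ < c₁) :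
    ∃ C : ℝ, 0 < C ∧ ∀ {C₁ C₂ : ℝ}, 24 ≤ C₁ → 3 * 2 ^ 14 ≤ C₂ →
      ∀ (d K T : ℕ) (w : Fin K → ℝ) (μ : Fin K → EuclideanSpace ℝ (Fin d)),
        (∀ k, 0 < w k) → ∑ k, w k = 1 →
        ∀ (αbar α : ℕ → ℝ),
          αbar T = (T : ℝ) ^ (-c₀) →
          (∀ t : ℕ, 2 ≤ t → t ≤ T →
            αbar (t - 1) = αbar t + c₁ * (log T / T) * αbar t * (1 - αbar t)) →
          (∀ t : ℕ, 2 ≤ t → t ≤ T → α t = αbar t / αbar (t - 1)) →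
          α 1 = αbar 1 →
          ∀ t : ℕ, 1 ≤ t → t ≤ T →
            ∫ x in (Eset d K T w μ (αbar t) (α t) C₁ C₂)ᶜ, mixDensity d K w μ (αbar t) x ≤
              C / (T : ℝ) ^ 3 := by
  obtain ⟨N, hN⟩ := Filter.eventually_atTop.1 <| (Filter.eventually_ge_atTop 2).and <|
    ((tendsto_mul_log_div_atTop c₁).eventually_le_const (by norm_num : (0 : ℝ) < 1 / 16)).and <|
      (tendsto_rpow_neg_mul_one_add_log_div_pow hc).eventually_ge_atTop 15
  refine ⟨2 + (N : ℝ) ^ 3, by positivity, ?_⟩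
  intro C₁ C₂ hC₁ hC₂ d K T w μ hw hws αbar α hT hrec hα hα₁ t ht htT
  have hT₁ : (1 : ℝ) ≤ T := by exact_mod_cast ht.trans htT
  have hT₃ : (0 : ℝ) < (T : ℝ) ^ 3 := by positivity
  rcases lt_or_ge T N with hlt | hge
  · refine (setIntegral_mixDensity_le_one (fun k => (hw k).le) hws _).trans ?_
    rw [one_le_div hT₃]
    have : (T : ℝ) ^ 3 ≤ (N : ℝ) ^ 3 := by gcongr
    linarith
  · obtain ⟨hT₂, hsmall, hgrowth⟩ := hN T hge
    have : NeZero K := ⟨by rintro rfl; simp at hws⟩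
    have hαT : αbar T ∈ Set.Ioc (0 : ℝ) 1 := by
      rw [hT]
      exact ⟨by positivity, rpow_le_one_of_one_le_of_nonpos hT₁ (by linarith)⟩
    obtain ⟨habar, hrate⟩ := cumulative_mem_and_rate_mem (δ := 1 / 16)
      (mul_nonneg (hc₀.trans hc.le) (div_nonneg (log_nonneg hT₁) (by positivity))) hsmall
      (by norm_num) hαT (by rw [hT]; linarith) hrec hα hα₁ ht htT
    refine (setIntegral_compl_Eset_le hw hws habar.1.le (by linarith [hrate.1]) hrate.2 hC₁ hC₂
      hT₂).trans ?_
    gcongr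
    linarith [pow_nonneg (Nat.cast_nonneg (α := ℝ) N) 3]

/-- Lemma 5. For sufficiently large absolute constants `C₁, C₂` in the
definition of `E_t`, there exists an absolute constant `C > 0` such that for every
`t ∈ [T]`, `∫_{E_t^c} p_{X_t^GMM}(x) dx ≤ C T^{−3}`. -/
theorem stmt7 :
    ∀ cR : ℝ, 0 < cR →
      ∃ c₀₀ c₁₀ C₁₀ C₂₀ : ℝ, 0 < c₀₀ ∧ 0 < c₁₀ ∧ 0 < C₁₀ ∧ 0 < C₂₀ ∧
        ∀ c₀ c₁ C₁ C₂ : ℝ, c₀₀ ≤ c₀ → c₁₀ ≤ c₁ → C₁₀ ≤ C₁ → C₂₀ ≤ C₂ → 4 < c₁ / c₀ →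
          ∃ C : ℝ, 0 < C ∧
            ∀ (d K T : ℕ), 1 ≤ d → 1 ≤ K → 1 ≤ T →
              ∀ (w : Fin K → ℝ) (μ : Fin K → EuclideanSpace ℝ (Fin d)),
                (∀ k, w k ∈ Set.Ioo (0 : ℝ) 1) → (∑ k, w k = 1) →
                (∀ k, ‖μ k‖ ≤ (T : ℝ) ^ cR) →
                ∀ (αbar α : ℕ → ℝ),
                  αbar T = (T : ℝ) ^ (-c₀) →
                  (∀ t : ℕ, 2 ≤ t → t ≤ T →
                    αbar (t - 1) = αbar t + c₁ * (Real.log T / T) * αbar t * (1 - αbar t)) →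
                  (∀ t : ℕ, 2 ≤ t → t ≤ T → α t = αbar t / αbar (t - 1)) →
                  α 1 = αbar 1 →
                  ∀ t : ℕ, 1 ≤ t → t ≤ T →
                    (∫ x in (Eset d K T w μ (αbar t) (α t) C₁ C₂)ᶜ,
                        mixDensity d K w μ (αbar t) x) ≤
                      C / (T : ℝ) ^ 3 := by
  intro cR _
  refine ⟨1, 1, 24, 3 * 2 ^ 14, by norm_num, by norm_num, by norm_num, by norm_num, ?_⟩
  intro c₀ c₁ C₁ C₂ hc₀ _ hC₁ hC₂ hc
  rw [lt_div_iff₀ (by linarith)] at hc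
  obtain ⟨C, hC, hbound⟩ := stmt7_general (c₀ := c₀) (c₁ := c₁) (by linarith) (by linarith)
  refine ⟨C, hC, fun d K T _ _ _ w μ hw hws _ αbar α => ?_⟩
  exact hbound hC₁ hC₂ d K T w μ (fun k => (hw k).1) hws αbar α
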